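/- arXiv:0801.1674 — 5 statements merged into one kernel-verified Lean document; each statement's English description precedes it below -/
import Mathlib

section
/- Let u : ℝ → ℝ → ℝ (first argument time t, second argument space x) be smooth (ContDiff of order ∞ jointly in both variables). Suppose that for all t and x, ∂u/∂t = ∂²u/∂x² − u·(∂u/∂x). Then for all t and x, ∂²u/∂t² = ∂⁴u/∂x⁴ − 2u·(∂³u/∂x³) + (u² − 4·∂u/∂x)·(∂²u/∂x²) + 2u·(∂u/∂x)². -/
namespace BurgersAux

theorem hasX (F : ℝ × ℝ → ℝ) (hF : ContDiff ℝ (⊤ : ℕ∞) F) (t x : ℝ) :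
    HasDerivAt (fun y => F (t, y)) (fderiv ℝ F (t, x) (0, 1)) x := by
  have h1 : HasFDerivAt F (fderiv ℝ F (t, x)) (t, x) :=
    (hF.differentiable (by simp) (t, x)).hasFDerivAt
  exact h1.comp_hasDerivAt x ((hasDerivAt_const x t).prodMk (hasDerivAt_id x))

theorem hasT (F : ℝ × ℝ → ℝ) (hF : ContDiff ℝ (⊤ : ℕ∞) F) (t x : ℝ) :
    HasDerivAt (fun s => F (s, x)) (fderiv ℝ F (t, x) (1, 0)) t := by
  have h1 : HasFDerivAt F (fderiv ℝ F (t, x)) (t, x) :=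
    (hF.differentiable (by simp) (t, x)).hasFDerivAt
  exact h1.comp_hasDerivAt t ((hasDerivAt_id t).prodMk (hasDerivAt_const t x))

theorem smooth (F : ℝ × ℝ → ℝ) (hF : ContDiff ℝ (⊤ : ℕ∞) F) (v : ℝ × ℝ) :
    ContDiff ℝ (⊤ : ℕ∞) (fun p => fderiv ℝ F p v) :=
  (hF.fderiv_right (m := (⊤ : ℕ∞)) (by simp)).clm_apply contDiff_const

theorem swap (F : ℝ × ℝ → ℝ) (hF : ContDiff ℝ (⊤ : ℕ∞) F) (v w p : ℝ × ℝ) :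
    fderiv ℝ (fun p => fderiv ℝ F p v) p w = fderiv ℝ (fun p => fderiv ℝ F p w) p v := by
  have hd : DifferentiableAt ℝ (fderiv ℝ F) p :=
    (hF.fderiv_right (m := (⊤ : ℕ∞)) (by simp)).differentiable (by simp) p
  have hs : IsSymmSndFDerivAt ℝ F p :=
    hF.contDiffAt.isSymmSndFDerivAt (by
      simp only [minSmoothness_of_isRCLikeNormedField]
      exact WithTop.coe_le_coe.2 (le_top : (2 : ℕ∞) ≤ ⊤))
  have e : ∀ a b : ℝ × ℝ, fderiv ℝ (fun p => fderiv ℝ F p a) p b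
      = fderiv ℝ (fderiv ℝ F) p b a := by
    intro a b
    rw [fderiv_clm_apply hd (differentiableAt_const a)]
    simp
  rw [e, e]
  exact hs w v

end BurgersAux

open BurgersAux in

/-- Equation (8) of the paper: if `u_t = u_xx − u u_x` for a smooth `u`, then
`u_tt = u_xxxx − 2 u u_xxx + (u² − 4 u_x) u_xx + 2 u (u_x)²`. -/
theorem second_time_derivative_burgers
    (u : ℝ → ℝ → ℝ)
    (hu : ContDiff ℝ (⊤ : ℕ∞) fun p : ℝ × ℝ => u p.1 p.2)
    (heq : ∀ t x, deriv (fun s => u s x) t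
      = iteratedDeriv 2 (u t) x - u t x * deriv (u t) x) :
    ∀ t x, iteratedDeriv 2 (fun s => u s x) t
      = iteratedDeriv 4 (u t) x
        - 2 * u t x * iteratedDeriv 3 (u t) x
        + ((u t x) ^ 2 - 4 * deriv (u t) x) * iteratedDeriv 2 (u t) x
        + 2 * u t x * (deriv (u t) x) ^ 2 := by
  intro t x
  obtain ⟨F, rfl⟩ : ∃ F : ℝ × ℝ → ℝ, u = fun t x => F (t, x) :=
    ⟨fun p => u p.1 p.2, rfl⟩
  change ContDiff ℝ (⊤ : ℕ∞) F at hu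
  have hX : ∀ G : ℝ × ℝ → ℝ, ContDiff ℝ (⊤ : ℕ∞) G → ∀ t,
      deriv (fun y => G (t, y)) = fun y => fderiv ℝ G (t, y) (0, 1) :=
    fun G hG t => funext fun y => (hasX G hG t y).deriv
  obtain ⟨F1, hF1⟩ : ∃ G, G = fun p => fderiv ℝ F p (0, 1) := ⟨_, rfl⟩
  obtain ⟨F2, hF2⟩ : ∃ G, G = fun p => fderiv ℝ F1 p (0, 1) := ⟨_, rfl⟩
  obtain ⟨F3, hF3⟩ : ∃ G, G = fun p => fderiv ℝ F2 p (0, 1) := ⟨_, rfl⟩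
  obtain ⟨F4, hF4⟩ : ∃ G, G = fun p => fderiv ℝ F3 p (0, 1) := ⟨_, rfl⟩
  obtain ⟨V, hV⟩ : ∃ G, G = fun p => fderiv ℝ F p (1, 0) := ⟨_, rfl⟩
  have s1 : ContDiff ℝ (⊤ : ℕ∞) F1 := hF1 ▸ smooth F hu _
  have s2 : ContDiff ℝ (⊤ : ℕ∞) F2 := hF2 ▸ smooth F1 s1 _
  have s3 : ContDiff ℝ (⊤ : ℕ∞) F3 := hF3 ▸ smooth F2 s2 _
  have sV : ContDiff ℝ (⊤ : ℕ∞) V := hV ▸ smooth F hu _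
  have x0 : ∀ t x, HasDerivAt (fun y => F (t, y)) (F1 (t, x)) x := by
    intro t x; rw [hF1]; exact hasX F hu t x
  have x1 : ∀ t x, HasDerivAt (fun y => F1 (t, y)) (F2 (t, x)) x := by
    intro t x; rw [hF2]; exact hasX F1 s1 t x
  have x2 : ∀ t x, HasDerivAt (fun y => F2 (t, y)) (F3 (t, x)) x := by
    intro t x; rw [hF3]; exact hasX F2 s2 t x
  have x3 : ∀ t x, HasDerivAt (fun y => F3 (t, y)) (F4 (t, x)) x := by
    intro t x; rw [hF4]; exact hasX F3 s3 t x
  have t0 : ∀ t x, HasDerivAt (fun s => F (s, x)) (V (t, x)) t := by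
    intro t x; rw [hV]; exact hasT F hu t x
  have d1 : ∀ t, deriv (fun y => F (t, y)) = fun y => F1 (t, y) :=
    fun t => funext fun y => (x0 t y).deriv
  have d2 : ∀ t, iteratedDeriv 2 (fun y => F (t, y)) = fun y => F2 (t, y) := by
    intro t
    rw [iteratedDeriv_succ, iteratedDeriv_one, d1]
    exact funext fun y => (x1 t y).deriv
  have d3 : ∀ t, iteratedDeriv 3 (fun y => F (t, y)) = fun y => F3 (t, y) := by
    intro t
    rw [iteratedDeriv_succ, d2]
    exact funext fun y => (x2 t y).deriv
  have d4 : ∀ t, iteratedDeriv 4 (fun y => F (t, y)) = fun y => F4 (t, y) := by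
    intro t
    rw [iteratedDeriv_succ, d3]
    exact funext fun y => (x3 t y).deriv
  have hVe : ∀ t x, V (t, x) = F2 (t, x) - F (t, x) * F1 (t, x) := by
    intro t x
    have h := heq t x
    simp only [d1, d2] at h
    rw [← h]
    exact (t0 t x).deriv.symm
  have v1 : ∀ t x, HasDerivAt (fun y => V (t, y))
      (F3 (t, x) - (F1 (t, x) * F1 (t, x) + F (t, x) * F2 (t, x))) x := by
    intro t x
    rw [show (fun y => V (t, y)) = fun y => F2 (t, y) - F (t, y) * F1 (t, y) from
      funext fun y => hVe t y]
    exact (x2 t x).sub ((x0 t x).mul (x1 t x))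
  have v2 : HasDerivAt (fun y => F3 (t, y) - (F1 (t, y) * F1 (t, y) + F (t, y) * F2 (t, y)))
      (F4 (t, x) - ((F2 (t, x) * F1 (t, x) + F1 (t, x) * F2 (t, x))
        + (F1 (t, x) * F2 (t, x) + F (t, x) * F3 (t, x)))) x :=
    (x3 t x).sub (((x1 t x).mul (x1 t x)).add ((x0 t x).mul (x2 t x)))
  have w1 : ∀ t x, fderiv ℝ F1 (t, x) (1, 0)
      = F3 (t, x) - (F1 (t, x) * F1 (t, x) + F (t, x) * F2 (t, x)) := by
    intro t x
    rw [hF1, swap F hu, ← hF1, ← hV]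
    exact (hasX V sV t x).unique (v1 t x)
  have w2 : fderiv ℝ F2 (t, x) (1, 0)
      = F4 (t, x) - ((F2 (t, x) * F1 (t, x) + F1 (t, x) * F2 (t, x))
        + (F1 (t, x) * F2 (t, x) + F (t, x) * F3 (t, x))) := by
    rw [hF2, swap F1 s1, ← hF2]
    have h := hasX _ (smooth F1 s1 (1, 0)) t x
    refine h.unique ?_
    simp only [w1]
    exact v2
  have key : HasDerivAt (fun s => F2 (s, x) - F (s, x) * F1 (s, x))
      (fderiv ℝ F2 (t, x) (1, 0)
        - (V (t, x) * F1 (t, x) + F (t, x) * fderiv ℝ F1 (t, x) (1, 0))) t :=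
    (hasT F2 s2 t x).sub ((t0 t x).mul (hasT F1 s1 t x))
  have e : deriv (fun s => F (s, x)) = fun s => F2 (s, x) - F (s, x) * F1 (s, x) :=
    funext fun s => (t0 s x).deriv.trans (hVe s x)
  simp only [d1, d2, d3, d4]
  rw [iteratedDeriv_succ, iteratedDeriv_one, e, key.deriv, w1, w2, hVe]
  ring
end

section
/- Let T_s : ℝ → ℝ be continuous and bounded. Define T(x,t) = (x/(2√π)) ∫₀ᵗ T_s(τ) · (t−τ)^(−3/2) · exp(−x²/(4(t−τ))) dτ for x > 0 and t > 0. Then for every x > 0 and t > 0, T satisfies the heat equation ∂T/∂t (x,t) = ∂²T/∂x² (x,t). -/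
open Real Filter Topology

/-- The representation formula (30) of the paper for the solution of the
half-line heat problem: `T(x,t) = (x/(2√π)) ∫₀ᵗ T_s(τ)(t−τ)^(−3/2) exp(−x²/(4(t−τ))) dτ`. -/
noncomputable def heatT (Ts : ℝ → ℝ) (x t : ℝ) : ℝ :=
  (x / (2 * Real.sqrt π)) *
    ∫ τ in (0:ℝ)..t, Ts τ * (t - τ) ^ (-(3 / 2) : ℝ) * Real.exp (-x ^ 2 / (4 * (t - τ)))

open MeasureTheory Set

noncomputable def phiK (p a s : ℝ) : ℝ := if s ≤ 0 then 0 else s ^ p * Real.exp (-a / s)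

lemma phiK_of_nonpos (p a : ℝ) {s : ℝ} (h : s ≤ 0) : phiK p a s = 0 := if_pos h

lemma phiK_of_pos (p a : ℝ) {s : ℝ} (h : 0 < s) : phiK p a s = s ^ p * Real.exp (-a / s) :=
  if_neg (not_le.2 h)

lemma phiK_tendsto (p a : ℝ) (ha : 0 < a) : Tendsto (phiK p a) (𝓝 0) (𝓝 0) := by
  have h1 : Tendsto (phiK p a) (𝓝[>] 0) (𝓝 0) := by
    have := (tendsto_rpow_mul_exp_neg_mul_atTop_nhds_zero (-p) a ha).comp
      (tendsto_inv_nhdsGT_zero (𝕜 := ℝ))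
    refine this.congr' ?_
    filter_upwards [self_mem_nhdsWithin] with s hs
    have hs : 0 < s := hs
    rw [phiK_of_pos p a hs]
    simp only [Function.comp]
    rw [Real.inv_rpow hs.le, Real.rpow_neg hs.le, inv_inv, div_eq_mul_inv]
  have h2 : Tendsto (phiK p a) (𝓝[≤] 0) (𝓝 0) := by
    refine tendsto_const_nhds.congr' ?_
    filter_upwards [self_mem_nhdsWithin] with s hs
    rw [phiK_of_nonpos p a hs]
  have h3 := h2.sup h1
  rwa [nhdsLE_sup_nhdsGT (0:ℝ)] at h3

lemma phiK_hasDerivAt_s (p a : ℝ) (ha : 0 < a) (s : ℝ) :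
    HasDerivAt (phiK p a) (p * phiK (p - 1) a s + a * phiK (p - 2) a s) s := by
  rcases lt_trichotomy s 0 with h | h | h
  · rw [phiK_of_nonpos _ _ h.le, phiK_of_nonpos _ _ h.le]
    have : HasDerivAt (fun _ : ℝ => (0:ℝ)) 0 s := hasDerivAt_const _ _
    simp only [mul_zero, add_zero]
    refine this.congr_of_eventuallyEq ?_
    filter_upwards [Iio_mem_nhds h] with u hu
    exact phiK_of_nonpos _ _ (le_of_lt hu)
  · subst h
    rw [phiK_of_nonpos _ _ le_rfl, phiK_of_nonpos _ _ le_rfl]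
    simp only [mul_zero, add_zero]
    rw [hasDerivAt_iff_tendsto_slope]
    refine ((phiK_tendsto (p - 1) a ha).mono_left nhdsWithin_le_nhds).congr' ?_
    filter_upwards with u
    rw [slope_def_field, phiK_of_nonpos p a le_rfl]
    rcases le_or_gt u 0 with hu | hu
    · simp [phiK_of_nonpos _ _ hu]
    · rw [phiK_of_pos _ _ hu, phiK_of_pos _ _ hu, Real.rpow_sub_one hu.ne']
      simp only [sub_zero]; ring
  · rw [phiK_of_pos _ _ h, phiK_of_pos _ _ h]
    have h1 : HasDerivAt (fun u : ℝ => u ^ p) (p * s ^ (p - 1)) s :=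
      Real.hasDerivAt_rpow_const (Or.inl h.ne')
    have h2 : HasDerivAt (fun u : ℝ => -a / u) (a / s ^ 2) s := by
      have := (hasDerivAt_inv h.ne').const_mul (-a)
      simp only [div_eq_mul_inv]
      refine this.congr_deriv ?_
      ring
    have h3 := h1.mul h2.exp
    have h4 : p * (s ^ (p - 1) * Real.exp (-a / s)) + a * (s ^ (p - 2) * Real.exp (-a / s))
        = p * s ^ (p - 1) * Real.exp (-a / s) + s ^ p * (Real.exp (-a / s) * (a / s ^ 2)) := by
      have : s ^ (p - 2) = s ^ p / s ^ 2 := by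
        rw [Real.rpow_sub h]; norm_num
      rw [this]; ring
    rw [h4]
    refine h3.congr_of_eventuallyEq ?_
    filter_upwards [Ioi_mem_nhds h] with u hu
    exact phiK_of_pos _ _ hu

lemma phiK_continuous (p a : ℝ) (ha : 0 < a) : Continuous (phiK p a) :=
  continuous_iff_continuousAt.2 fun s => (phiK_hasDerivAt_s p a ha s).continuousAt

lemma phiK_hasDerivAt_a (p a s : ℝ) :
    HasDerivAt (fun b => phiK p b s) (-phiK (p - 1) a s) a := by
  rcases le_or_gt s 0 with h | h
  · simp only [phiK_of_nonpos _ _ h, neg_zero]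
    exact hasDerivAt_const _ _
  · simp only [phiK_of_pos _ _ h]
    have h2 : HasDerivAt (fun b : ℝ => -b / s) (-1 / s) a := (hasDerivAt_id a).neg.div_const s
    have := h2.exp.const_mul (s ^ p)
    refine this.congr_deriv ?_
    rw [Real.rpow_sub_one h.ne']; ring

lemma phiK_nonneg (p a s : ℝ) : 0 ≤ phiK p a s := by
  unfold phiK; split_ifs with h
  · exact le_rfl
  · have := not_le.1 h; positivity

lemma phiK_anti (p s : ℝ) {a b : ℝ} (h : a ≤ b) : phiK p b s ≤ phiK p a s := by
  rcases le_or_gt s 0 with hs | hs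
  · simp [phiK_of_nonpos _ _ hs]
  · rw [phiK_of_pos _ _ hs, phiK_of_pos _ _ hs]
    gcongr

lemma phiK_bound (p a S : ℝ) (ha : 0 < a) :
    ∃ C, 0 ≤ C ∧ ∀ b, a ≤ b → ∀ s, s ≤ S → |phiK p b s| ≤ C := by
  obtain ⟨C, hC⟩ := (isCompact_Icc (a := (0:ℝ)) (b := S)).exists_bound_of_continuousOn
    (phiK_continuous p a ha).continuousOn
  refine ⟨max C 0, le_max_right _ _, fun b hb s hs => ?_⟩
  rw [abs_of_nonneg (phiK_nonneg _ _ _)]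
  rcases le_or_gt s 0 with h | h
  · rw [phiK_of_nonpos _ _ h]; exact le_max_right _ _
  · exact (phiK_anti p s hb).trans ((le_abs_self _).trans ((hC s ⟨h.le, hs⟩).trans (le_max_left _ _)))

noncomputable def JK (Ts : ℝ → ℝ) (N p a t : ℝ) : ℝ :=
  ∫ τ in (0:ℝ)..N, Ts τ * phiK p a (t - τ)

lemma JK_cont (Ts : ℝ → ℝ) (hc : Continuous Ts) (p a t : ℝ) (ha : 0 < a) :
    Continuous fun τ => Ts τ * phiK p a (t - τ) :=
  hc.mul ((phiK_continuous p a ha).comp (by fun_prop))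

lemma JK_hasDerivAt_a (Ts : ℝ → ℝ) (hc : Continuous Ts) (M : ℝ) (hM : ∀ τ, |Ts τ| ≤ M)
    (N : ℝ) (hN : 0 < N) (p a t : ℝ) (ha : 0 < a) :
    HasDerivAt (fun b => JK Ts N p b t) (-JK Ts N (p - 1) a t) a := by
  obtain ⟨C, hC0, hC⟩ := phiK_bound (p - 1) (a / 2) t (by linarith)
  have hM0 : 0 ≤ M := (abs_nonneg _).trans (hM 0)
  have key := intervalIntegral.hasDerivAt_integral_of_dominated_loc_of_deriv_le
    (μ := volume) (a := 0) (b := N) (s := Ioi (a / 2)) (x₀ := a)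
    (F := fun b τ => Ts τ * phiK p b (t - τ))
    (F' := fun b τ => Ts τ * -phiK (p - 1) b (t - τ)) (bound := fun _ => M * C)
    (Ioi_mem_nhds (by linarith))
    (by
      filter_upwards [Ioi_mem_nhds ha] with b hb
      exact (JK_cont Ts hc p b t hb).aestronglyMeasurable)
    ((JK_cont Ts hc p a t ha).intervalIntegrable _ _)
    (by
      have := (JK_cont Ts hc (p - 1) a t ha).neg.aestronglyMeasurable
        (μ := volume.restrict (uIoc 0 N))
      refine this.congr ?_
      filter_upwards with τ
      simp)
    (by
      filter_upwards with τ hτ b hb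
      rw [uIoc_of_le hN.le] at hτ
      rw [Real.norm_eq_abs, abs_mul, abs_neg]
      exact mul_le_mul (hM τ) (hC b (le_of_lt hb) _ (by linarith [hτ.1])) (abs_nonneg _) hM0)
    (by simp)
    (by
      filter_upwards with τ hτ b hb
      exact (phiK_hasDerivAt_a p b (t - τ)).const_mul _)
  have := key.2
  simp only [mul_neg, intervalIntegral.integral_neg] at this
  exact this

lemma JK_hasDerivAt_t (Ts : ℝ → ℝ) (hc : Continuous Ts) (M : ℝ) (hM : ∀ τ, |Ts τ| ≤ M)
    (N : ℝ) (hN : 0 < N) (p a t : ℝ) (ha : 0 < a) :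
    HasDerivAt (fun u => JK Ts N p a u)
      (p * JK Ts N (p - 1) a t + a * JK Ts N (p - 2) a t) t := by
  obtain ⟨C, hC0, hC⟩ := phiK_bound (p - 1) a (t + 1) ha
  obtain ⟨D, hD0, hD⟩ := phiK_bound (p - 2) a (t + 1) ha
  have hM0 : 0 ≤ M := (abs_nonneg _).trans (hM 0)
  have c1 := JK_cont Ts hc (p - 1) a t ha
  have c2 := JK_cont Ts hc (p - 2) a t ha
  have key := intervalIntegral.hasDerivAt_integral_of_dominated_loc_of_deriv_le
    (μ := volume) (a := 0) (b := N) (s := Iio (t + 1)) (x₀ := t)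
    (F := fun u τ => Ts τ * phiK p a (u - τ))
    (F' := fun u τ => p * (Ts τ * phiK (p - 1) a (u - τ)) + a * (Ts τ * phiK (p - 2) a (u - τ)))
    (bound := fun _ => |p| * (M * C) + |a| * (M * D))
    (Iio_mem_nhds (by linarith))
    (by
      filter_upwards with u
      exact (JK_cont Ts hc p a u ha).aestronglyMeasurable)
    ((JK_cont Ts hc p a t ha).intervalIntegrable _ _)
    ((c1.const_mul p).add (c2.const_mul a)).aestronglyMeasurable
    (by
      filter_upwards with τ hτ u hu
      rw [uIoc_of_le hN.le] at hτ
      have hu : u < t + 1 := hu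
      rw [Real.norm_eq_abs]
      refine (abs_add_le _ _).trans ?_
      rw [abs_mul, abs_mul, abs_mul, abs_mul]
      have e1 := hC a le_rfl (u - τ) (by linarith [hτ.1])
      have e2 := hD a le_rfl (u - τ) (by linarith [hτ.1])
      have e3 := hM τ
      gcongr)
    (by simp)
    (by
      filter_upwards with τ hτ u hu
      have h1 : HasDerivAt (fun u : ℝ => u - τ) 1 u := (hasDerivAt_id u).sub_const τ
      have := ((phiK_hasDerivAt_s p a ha (u - τ)).comp u h1).const_mul (Ts τ)
      refine this.congr_deriv ?_
      ring)
  have := key.2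
  rw [intervalIntegral.integral_add ((c1.const_mul p).intervalIntegrable _ _)
    ((c2.const_mul a).intervalIntegrable _ _), intervalIntegral.integral_const_mul,
    intervalIntegral.integral_const_mul] at this
  exact this

lemma heatT_eq_JK (Ts : ℝ → ℝ) (hc : Continuous Ts) (N y s : ℝ) (hy : 0 < y) (hs : 0 < s)
    (hsN : s < N) :
    heatT Ts y s = y / (2 * Real.sqrt π) * JK Ts N (-(3 / 2)) (y ^ 2 / 4) s := by
  have hc' := JK_cont Ts hc (-(3/2)) (y ^ 2 / 4) s (by positivity)
  unfold heatT JK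
  congr 1
  rw [← intervalIntegral.integral_add_adjacent_intervals (hc'.intervalIntegrable 0 s)
    (hc'.intervalIntegrable s N)]
  have h2 : ∫ τ in s..N, Ts τ * phiK (-(3 / 2)) (y ^ 2 / 4) (s - τ) = 0 := by
    rw [← intervalIntegral.integral_zero (a := s) (b := N) (μ := volume) (E := ℝ)]
    refine intervalIntegral.integral_congr fun τ hτ => ?_
    rw [uIcc_of_le hsN.le] at hτ
    rw [phiK_of_nonpos _ _ (by linarith [hτ.1]), mul_zero]
  rw [h2, add_zero]
  refine intervalIntegral.integral_congr fun τ hτ => ?_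
  rw [uIcc_of_le hs.le] at hτ
  rcases hτ.2.eq_or_lt with h | h
  · subst h
    rw [sub_self, phiK_of_nonpos _ _ le_rfl, Real.zero_rpow (by norm_num)]
    simp
  · rw [phiK_of_pos _ _ (by linarith), mul_assoc]
    congr 3
    rw [neg_div, neg_div, div_div]

/-- For continuous bounded boundary data `T_s`, the representation (30) satisfies the
heat equation `∂T/∂t = ∂²T/∂x²` for all `x > 0`, `t > 0`. -/
theorem heatT_satisfies_heat_equation
    (Ts : ℝ → ℝ) (hc : Continuous Ts) (hb : ∃ M, ∀ τ, |Ts τ| ≤ M) :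
    ∀ x t : ℝ, 0 < x → 0 < t →
      deriv (fun s => heatT Ts x s) t = iteratedDeriv 2 (fun y => heatT Ts y t) x := by
  intro x t hx ht
  obtain ⟨M, hM⟩ := hb
  have hN : 0 < t + 1 := by linarith
  set J := JK Ts (t + 1) with hJ
  have hJx : ∀ p y : ℝ, 0 < y →
      HasDerivAt (fun z => J p (z ^ 2 / 4) t) (-J (p - 1) (y ^ 2 / 4) t * (y / 2)) y := by
    intro p y hy
    have h1 : HasDerivAt (fun z : ℝ => z ^ 2 / 4) (y / 2) y := by
      have := (hasDerivAt_pow 2 y).div_const 4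
      refine this.congr_deriv ?_
      norm_num; ring
    exact (JK_hasDerivAt_a Ts hc M hM (t + 1) hN p (y ^ 2 / 4) t (by positivity)).comp y h1
  have hL : HasDerivAt (fun s => heatT Ts x s) (x / (2 * Real.sqrt π) *
      (-(3 / 2) * J (-(3 / 2) - 1) (x ^ 2 / 4) t + x ^ 2 / 4 * J (-(3 / 2) - 2) (x ^ 2 / 4) t)) t := by
    refine ((JK_hasDerivAt_t Ts hc M hM (t + 1) hN (-(3 / 2)) (x ^ 2 / 4) t
      (by positivity)).const_mul _).congr_of_eventuallyEq ?_
    filter_upwards [Ioo_mem_nhds ht (lt_add_one t)] with s hs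
    exact heatT_eq_JK Ts hc (t + 1) x s hx hs.1 hs.2
  have h1 : ∀ y : ℝ, 0 < y → HasDerivAt (fun y => heatT Ts y t)
      (1 / (2 * Real.sqrt π) * J (-(3 / 2)) (y ^ 2 / 4) t +
        y / (2 * Real.sqrt π) * (-J (-(3 / 2) - 1) (y ^ 2 / 4) t * (y / 2))) y := by
    intro y hy
    refine (((hasDerivAt_id y).div_const _).mul (hJx _ y hy)).congr_of_eventuallyEq ?_
    filter_upwards [Ioi_mem_nhds hy] with z hz
    exact heatT_eq_JK Ts hc (t + 1) z t hz ht (lt_add_one t)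
  rw [hL.deriv, iteratedDeriv_succ, iteratedDeriv_one]
  have hev : deriv (fun y => heatT Ts y t) =ᶠ[𝓝 x] fun y =>
      (1 / (2 * Real.sqrt π) * J (-(3 / 2)) (y ^ 2 / 4) t +
        y / (2 * Real.sqrt π) * (-J (-(3 / 2) - 1) (y ^ 2 / 4) t * (y / 2))) := by
    filter_upwards [Ioi_mem_nhds hx] with y hy
    exact (h1 y hy).deriv
  have h2 := ((hJx (-(3 / 2)) x hx).const_mul (1 / (2 * Real.sqrt π))).add
    (((hasDerivAt_id x).div_const (2 * Real.sqrt π)).mul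
      ((hJx (-(3 / 2) - 1) x hx).neg.mul ((hasDerivAt_id x).div_const 2)))
  rw [hev.deriv_eq]
  refine Eq.trans ?_ (HasDerivAt.deriv h2).symm
  have e : (-(3 / 2) - 1 - 1 : ℝ) = -(3 / 2) - 2 := by ring
  rw [e]
  simp only [id, Pi.neg_apply, Pi.mul_apply]
  ring
end

section
/- Let T_s : ℝ → ℝ be continuous and bounded. Define T(x,t) = (x/(2√π)) ∫₀ᵗ T_s(τ) · (t−τ)^(−3/2) · exp(−x²/(4(t−τ))) dτ for x > 0 and t > 0. Then for every t > 0, the limit of T(x,t) as x → 0⁺ equals T_s(t). -/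
open Real Filter Topology

open MeasureTheory Set in
lemma heatT_eq (Ts : ℝ → ℝ) (t : ℝ) (ht : 0 < t) (x : ℝ) (hx : 0 < x) :
    heatT Ts x t = (1 / Real.sqrt π) * ∫ v in Ioi (0:ℝ),
      (Iic t).indicator (fun s => Ts (t - s)) (x ^ 2 / v ^ 2) * Real.exp (-(1/4) * v ^ 2) := by
  unfold heatT
  have h1 := intervalIntegral.integral_comp_sub_left (a := 0) (b := t)
    (fun s => Ts (t - s) * s ^ (-(3 / 2) : ℝ) * Real.exp (-x ^ 2 / (4 * s))) t
  simp only [sub_sub_cancel, sub_self, sub_zero] at h1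
  rw [h1, intervalIntegral.integral_of_le ht.le]
  set g : ℝ → ℝ := fun s => (Iic t).indicator (fun s => Ts (t - s)) s * s ^ (-(3 / 2) : ℝ) *
    Real.exp (-x ^ 2 / (4 * s)) with hg
  have h2 : ∫ s in Ioc 0 t, Ts (t - s) * s ^ (-(3 / 2) : ℝ) * Real.exp (-x ^ 2 / (4 * s))
      = ∫ s in Ioi (0:ℝ), g s := by
    have : Ioc (0:ℝ) t = Ioi 0 ∩ Iic t := by ext; simp
    rw [this, ← setIntegral_indicator measurableSet_Iic]
    congr 1
    ext s
    by_cases hs : s ∈ Iic t <;> simp [hg, hs]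
  rw [h2, ← integral_comp_rpow_Ioi g (p := -2) (by norm_num)]
  have h3 := integral_comp_mul_left_Ioi
    (fun u : ℝ => (|(-2:ℝ)| * u ^ ((-2:ℝ) - 1)) • g (u ^ (-2:ℝ))) 0 (inv_pos.mpr hx)
  simp only [mul_zero, inv_inv] at h3
  have h4 : ∫ v in Ioi (0:ℝ), (|(-2:ℝ)| * (x⁻¹ * v) ^ ((-2:ℝ) - 1)) • g ((x⁻¹ * v) ^ (-2:ℝ))
     = ∫ v in Ioi (0:ℝ), 2 * ((Iic t).indicator (fun s => Ts (t - s)) (x ^ 2 / v ^ 2) *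
        Real.exp (-(1/4) * v ^ 2)) := by
    refine setIntegral_congr_fun measurableSet_Ioi fun v hv => ?_
    have hv : 0 < v := hv
    have hu : 0 < x⁻¹ * v := by positivity
    have e1 : (x⁻¹ * v) ^ (-2:ℝ) = x ^ 2 / v ^ 2 := by
      rw [Real.rpow_neg hu.le, Real.rpow_ofNat]
      field_simp
    have e2 : (x⁻¹ * v) ^ ((-2:ℝ) - 1) * ((x⁻¹ * v) ^ (-2:ℝ)) ^ (-(3 / 2) : ℝ) = 1 := by
      rw [← Real.rpow_mul hu.le, ← Real.rpow_add hu]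
      norm_num
    have e3 : -x ^ 2 / (4 * (x ^ 2 / v ^ 2)) = -(1/4) * v ^ 2 := by
      field_simp
    have e4 : |(-2:ℝ)| = 2 := by norm_num
    rw [e1] at e2
    simp only [hg, smul_eq_mul, e1, e3, e4]
    linear_combination (2 * (Iic t).indicator (fun s => Ts (t - s)) (x ^ 2 / v ^ 2) *
        Real.exp (-(1/4) * v ^ 2)) * e2
  rw [h4, integral_const_mul, smul_eq_mul] at h3
  have := Real.sqrt_pos.mpr Real.pi_pos
  generalize (∫ v in Ioi (0:ℝ), (Iic t).indicator (fun s => Ts (t - s)) (x ^ 2 / v ^ 2) *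
        Real.exp (-(1/4) * v ^ 2)) = A at h3 ⊢
  field_simp
  linear_combination -h3

open MeasureTheory Set in
/-- For continuous bounded boundary data `T_s` and `t > 0`, the representation (30)
attains the boundary value: `T(x,t) → T_s(t)` as `x → 0⁺`
(assertion after equation (31) of the paper). -/
theorem heatT_boundary_value
    (Ts : ℝ → ℝ) (hc : Continuous Ts) (hb : ∃ M, ∀ τ, |Ts τ| ≤ M) :
    ∀ t : ℝ, 0 < t →
      Tendsto (fun x => heatT Ts x t) (𝓝[>] 0) (𝓝 (Ts t)) := by
  intro t ht
  obtain ⟨M, hM⟩ := hb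
  have hM0 : 0 ≤ M := (abs_nonneg _).trans (hM 0)
  have key : Tendsto (fun x : ℝ => ∫ v in Ioi (0:ℝ),
      (Iic t).indicator (fun s => Ts (t - s)) (x ^ 2 / v ^ 2) * Real.exp (-(1/4) * v ^ 2))
      (𝓝[>] 0) (𝓝 (∫ v in Ioi (0:ℝ), Ts t * Real.exp (-(1/4) * v ^ 2))) := by
    refine tendsto_integral_filter_of_dominated_convergence
      (fun v => M * Real.exp (-(1/4) * v ^ 2)) ?_ ?_ ?_ ?_
    · refine Eventually.of_forall fun x => Measurable.aestronglyMeasurable ?_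
      have h : Measurable ((Iic t).indicator (fun s => Ts (t - s))) :=
        (by fun_prop : Measurable (fun s => Ts (t - s))).indicator measurableSet_Iic
      exact (h.comp (by fun_prop : Measurable fun v : ℝ => x ^ 2 / v ^ 2)).mul (by fun_prop)
    · refine Eventually.of_forall fun x => Eventually.of_forall fun v => ?_
      rw [norm_mul, Real.norm_eq_abs, Real.norm_eq_abs, abs_of_pos (Real.exp_pos _)]
      gcongr
      by_cases h : x ^ 2 / v ^ 2 ∈ Iic t
      · rw [indicator_of_mem h]; exact hM _
      · rw [indicator_of_notMem h]; simpa using hM0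
    · exact ((integrable_exp_neg_mul_sq (by norm_num : (0:ℝ) < 1/4)).const_mul M).integrableOn
    · refine Eventually.of_forall fun v => Tendsto.mul_const _ ?_
      have h0 : Tendsto (fun x : ℝ => x ^ 2 / v ^ 2) (𝓝[>] 0) (𝓝 0) := by
        have : Continuous (fun x : ℝ => x ^ 2 / v ^ 2) := by fun_prop
        have := this.tendsto 0
        simp only [ne_eq, OfNat.ofNat_ne_zero, not_false_eq_true, zero_pow, zero_div] at this
        exact this.mono_left nhdsWithin_le_nhds
      have h1 : Tendsto (fun x : ℝ => Ts (t - x ^ 2 / v ^ 2)) (𝓝[>] 0) (𝓝 (Ts t)) := by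
        have := (hc.tendsto (t - 0)).comp (h0.const_sub t)
        simpa [Function.comp_def] using this
      refine h1.congr' ?_
      filter_upwards [h0.eventually (Iic_mem_nhds ht)] with x hx
      rw [indicator_of_mem (mem_Iic.mpr hx)]
  have := key.const_mul (1 / Real.sqrt π)
  have e : (1 / Real.sqrt π) * ∫ v in Ioi (0:ℝ), Ts t * Real.exp (-(1/4) * v ^ 2) = Ts t := by
    rw [integral_const_mul, integral_gaussian_Ioi]
    have h4 : Real.sqrt (π / (1/4)) = 2 * Real.sqrt π := by
      rw [show π / (1/4) = 2 ^ 2 * π by ring, Real.sqrt_mul (by norm_num),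
        Real.sqrt_sq (by norm_num)]
    have := Real.sqrt_pos.mpr Real.pi_pos
    rw [h4]
    field_simp
  rw [e] at this
  refine this.congr' ?_
  filter_upwards [self_mem_nhdsWithin] with x hx
  exact (heatT_eq Ts t ht x hx).symm
end

section
/- Let T_s : ℝ → ℝ be continuous and bounded. Define T(x,t) = (x/(2√π)) ∫₀ᵗ T_s(τ) · (t−τ)^(−3/2) · exp(−x²/(4(t−τ))) dτ for x > 0, t > 0. Then for every x > 0 and t > 0, ∂T/∂x (x,t) = (1/(2√π)) ∫₀ᵗ T_s(τ) · (t−τ)^(−3/2) · exp(−x²/(4(t−τ))) · (1 − x²/(2(t−τ))) dτ. -/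
open Real Filter Topology

theorem heat_rpow_le {s : ℝ} (hs : 0 < s) : s ^ (-(3 / 2) : ℝ) ≤ 1 + (s⁻¹) ^ 2 := by
  rw [Real.rpow_neg hs.le, ← Real.inv_rpow hs.le]
  have hu : 0 < s⁻¹ := inv_pos.mpr hs
  rcases le_total s⁻¹ 1 with h | h
  · have := Real.rpow_le_one hu.le h (by norm_num : (0:ℝ) ≤ 3 / 2)
    nlinarith [sq_nonneg s⁻¹]
  · have := Real.rpow_le_rpow_of_exponent_le h (by norm_num : (3 / 2 : ℝ) ≤ 2)
    rw [Real.rpow_two] at this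
    linarith

theorem heat_kernel_bound {a b : ℝ} (ha : 0 < a) (hb : 0 ≤ b) :
    ∃ C, 0 ≤ C ∧ ∀ u : ℝ, 0 < u → (1 + u ^ 2) * Real.exp (-(a * u)) * (1 + b * u) ≤ C := by
  have key : ∀ k : ℕ, ∀ u : ℝ, 0 < u → u ^ k * Real.exp (-(a * u)) ≤ k.factorial / a ^ k := by
    intro k u hu
    have h := Real.pow_div_factorial_le_exp (a * u) (by positivity) k
    rw [Real.exp_neg, ← div_eq_mul_inv, div_le_div_iff₀ (Real.exp_pos _) (by positivity)]
    rw [div_le_iff₀ (by positivity), mul_pow] at h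
    linarith
  refine ⟨(Nat.factorial 0) / a ^ 0 + b * ((Nat.factorial 1) / a ^ 1) + (Nat.factorial 2) / a ^ 2
    + b * ((Nat.factorial 3) / a ^ 3), by positivity, fun u hu => ?_⟩
  have h0 := key 0 u hu
  have h1 := mul_le_mul_of_nonneg_left (key 1 u hu) hb
  have h2 := key 2 u hu
  have h3 := mul_le_mul_of_nonneg_left (key 3 u hu) hb
  calc _ = u ^ 0 * Real.exp (-(a * u)) + b * (u ^ 1 * Real.exp (-(a * u)))
      + u ^ 2 * Real.exp (-(a * u)) + b * (u ^ 3 * Real.exp (-(a * u))) := by ring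
    _ ≤ _ := by linarith

/-- Differentiation under the integral sign (formula just before equation (32) of the paper):
`∂T/∂x (x,t) = (1/(2√π)) ∫₀ᵗ T_s(τ)(t−τ)^(−3/2) exp(−x²/(4(t−τ)))(1 − x²/(2(t−τ))) dτ`
for `x > 0`, `t > 0`. -/
theorem heatT_deriv_x
    (Ts : ℝ → ℝ) (hc : Continuous Ts) (hb : ∃ M, ∀ τ, |Ts τ| ≤ M) :
    ∀ x t : ℝ, 0 < x → 0 < t →
      deriv (fun y => heatT Ts y t) x
        = (1 / (2 * Real.sqrt π)) *
            ∫ τ in (0:ℝ)..t, Ts τ * (t - τ) ^ (-(3 / 2) : ℝ)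
              * Real.exp (-x ^ 2 / (4 * (t - τ))) * (1 - x ^ 2 / (2 * (t - τ))) := by
  intro x t hx ht
  obtain ⟨M, hM⟩ := hb
  have hM0 : 0 ≤ M := (abs_nonneg _).trans (hM 0)
  obtain ⟨C, hC0, hC⟩ := heat_kernel_bound (a := x ^ 2 / 16) (b := 2 * x ^ 2)
    (by positivity) (by positivity)
  have hTm : Measurable Ts := hc.measurable
  -- pointwise bound
  have hbd : ∀ τ ∈ Set.uIoc 0 t, ∀ y ∈ Set.Ioo (x / 2) (2 * x), ∀ w : ℝ,
      |w| ≤ 1 + 2 * x ^ 2 * (t - τ)⁻¹ →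
      ‖Ts τ * (t - τ) ^ (-(3 / 2) : ℝ) * Real.exp (-y ^ 2 / (4 * (t - τ))) * w‖ ≤ M * C := by
    intro τ hτ y hy w hw
    rw [Set.uIoc_of_le ht.le] at hτ
    rcases eq_or_lt_of_le hτ.2 with h | h
    · subst h
      rw [sub_self, Real.zero_rpow (by norm_num)]
      simp only [mul_zero, zero_mul, norm_zero]
      positivity
    · have hs : 0 < t - τ := sub_pos.mpr h
      generalize t - τ = s at *
      have hu : 0 < s⁻¹ := inv_pos.mpr hs
      have h1 := heat_rpow_le hs
      have h2 : Real.exp (-y ^ 2 / (4 * s)) ≤ Real.exp (-(x ^ 2 / 16 * s⁻¹)) := by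
        apply Real.exp_le_exp.mpr
        have e : -y ^ 2 / (4 * s) = -(y ^ 2 / 4 * s⁻¹) := by field_simp
        rw [e]
        apply neg_le_neg
        apply mul_le_mul_of_nonneg_right _ hu.le
        nlinarith [hy.1]
      have h3 := hC s⁻¹ hu
      have hr := Real.rpow_nonneg hs.le (-(3 / 2) : ℝ)
      rw [norm_mul, norm_mul, norm_mul, Real.norm_eq_abs, Real.norm_eq_abs, Real.norm_eq_abs,
        Real.norm_eq_abs, abs_of_nonneg hr, abs_of_pos (Real.exp_pos _)]
      calc _ ≤ M * (1 + s⁻¹ ^ 2) * Real.exp (-(x ^ 2 / 16 * s⁻¹)) * (1 + 2 * x ^ 2 * s⁻¹) := by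
            gcongr
            exact hM τ
        _ = M * ((1 + s⁻¹ ^ 2) * Real.exp (-(x ^ 2 / 16 * s⁻¹)) * (1 + 2 * x ^ 2 * s⁻¹)) := by ring
        _ ≤ _ := by gcongr
  have hxm : x ∈ Set.Ioo (x / 2) (2 * x) := ⟨by linarith, by linarith⟩
  have hinv : ∀ τ ∈ Set.uIoc 0 t, 0 ≤ (t - τ)⁻¹ := by
    intro τ hτ
    rw [Set.uIoc_of_le ht.le] at hτ
    exact inv_nonneg.mpr (sub_nonneg.mpr hτ.2)
  have main := intervalIntegral.hasDerivAt_integral_of_dominated_loc_of_deriv_le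
    (μ := MeasureTheory.volume) (a := 0) (b := t) (x₀ := x) (s := Set.Ioo (x / 2) (2 * x))
    (bound := fun _ => M * C)
    (F := fun y τ => y * (Ts τ * (t - τ) ^ (-(3 / 2) : ℝ) * Real.exp (-y ^ 2 / (4 * (t - τ)))))
    (F' := fun y τ => Ts τ * (t - τ) ^ (-(3 / 2) : ℝ)
              * Real.exp (-y ^ 2 / (4 * (t - τ))) * (1 - y ^ 2 / (2 * (t - τ))))
    (Ioo_mem_nhds hxm.1 hxm.2)
    (Eventually.of_forall fun y => by
      apply Measurable.aestronglyMeasurable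
      fun_prop)
    (by
      apply IntervalIntegrable.const_mul
      apply IntervalIntegrable.mono_fun' (g := fun _ => M * C) (by simp)
      · apply Measurable.aestronglyMeasurable
        fun_prop
      · refine (MeasureTheory.ae_restrict_iff' measurableSet_uIoc).mpr
          (Eventually.of_forall fun τ hτ => ?_)
        have := hbd τ hτ x hxm 1 (by
          have := hinv τ hτ
          rw [abs_one]
          have : 0 ≤ 2 * x ^ 2 * (t - τ)⁻¹ := by positivity
          linarith)
        rwa [mul_one] at this)
    (by
      apply Measurable.aestronglyMeasurable
      fun_prop)
    (Eventually.of_forall fun τ hτ y hy => by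
      apply hbd τ hτ y hy
      have hi := hinv τ hτ
      have e : y ^ 2 / (2 * (t - τ)) = y ^ 2 / 2 * (t - τ)⁻¹ := by
        rw [div_mul_eq_div_div, div_eq_mul_inv _ (t - τ)]
      have h1 : y ^ 2 / 2 * (t - τ)⁻¹ ≤ 2 * x ^ 2 * (t - τ)⁻¹ := by
        apply mul_le_mul_of_nonneg_right _ hi
        nlinarith [hy.1, hy.2]
      have h2 : 0 ≤ y ^ 2 / 2 * (t - τ)⁻¹ := by positivity
      rw [e, abs_le]
      constructor <;> linarith)
    (by simp)
    (Eventually.of_forall fun τ hτ y hy => by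
      have h1 : HasDerivAt (fun y : ℝ => -y ^ 2 / (4 * (t - τ))) (-(2 * y) / (4 * (t - τ))) y := by
        have := ((hasDerivAt_pow 2 y).neg).div_const (4 * (t - τ))
        simpa using this
      have h2 := (hasDerivAt_id y).mul
        ((h1.exp).const_mul (Ts τ * (t - τ) ^ (-(3 / 2) : ℝ)))
      refine h2.congr_deriv ?_
      have e : -(2 * y) / (4 * (t - τ)) = -(y / (2 * (t - τ))) := by
        rw [show 4 * (t - τ) = 2 * (2 * (t - τ)) by ring, neg_div,
          mul_div_mul_left _ _ two_ne_zero]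
      rw [e]
      simp only [id]
      ring)
  have hfun : (fun y => heatT Ts y t) = fun y => (1 / (2 * Real.sqrt π)) *
      ∫ τ in (0:ℝ)..t, y * (Ts τ * (t - τ) ^ (-(3 / 2) : ℝ)
        * Real.exp (-y ^ 2 / (4 * (t - τ)))) := by
    funext y
    rw [intervalIntegral.integral_const_mul, heatT]
    ring
  rw [hfun]
  exact (main.2.const_mul _).deriv
end

section
/- Let t₀ > 0 and δ > 0, and let T_s : ℝ → ℝ be continuous with T_s(τ) = 0 for all τ ≥ t₀ − δ. Then the function G(t) = ∫₀ᵗ T_s(τ) / √(t−τ) dτ is differentiable at t₀ with G′(t₀) = −(1/2) ∫₀^{t₀} T_s(τ) · (t₀−τ)^(−3/2) dτ. -/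
open Real

lemma abel_cut (b t : ℝ) (hb : 0 ≤ b) (hbt : b ≤ t) (f : ℝ → ℝ)
    (hf : ∀ τ, b ≤ τ → f τ = 0) :
    ∫ τ in (0:ℝ)..t, f τ = ∫ τ in (0:ℝ)..b, f τ := by
  rw [intervalIntegral.integral_of_le hb, intervalIntegral.integral_of_le (hb.trans hbt)]
  apply MeasureTheory.setIntegral_eq_of_subset_of_forall_sdiff_eq_zero measurableSet_Ioc
  · exact Set.Ioc_subset_Ioc_right hbt
  · rintro x ⟨hx1, hx2⟩
    apply hf
    by_contra h
    exact hx2 ⟨hx1.1, (not_le.mp h).le⟩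

/-- Equation (33) of the paper: for continuous `T_s` vanishing on `[t₀ − δ, ∞)`,
the Abel-type integral `G(t) = ∫₀ᵗ T_s(τ)/√(t−τ) dτ` is differentiable at `t₀` with
`G′(t₀) = −(1/2) ∫₀^{t₀} T_s(τ)(t₀−τ)^(−3/2) dτ`. -/
theorem abel_integral_deriv
    (t₀ δ : ℝ) (ht₀ : 0 < t₀) (hδ : 0 < δ)
    (Ts : ℝ → ℝ) (hc : Continuous Ts)
    (hvanish : ∀ τ : ℝ, t₀ - δ ≤ τ → Ts τ = 0)
    (G : ℝ → ℝ)
    (hG : ∀ t : ℝ, G t = ∫ τ in (0:ℝ)..t, Ts τ / Real.sqrt (t - τ)) :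
    HasDerivAt G
      (-(1 / 2) * ∫ τ in (0:ℝ)..t₀, Ts τ * (t₀ - τ) ^ (-(3 / 2) : ℝ)) t₀ := by
  obtain ⟨b, hb0, hbt, hb⟩ : ∃ b : ℝ, 0 ≤ b ∧ b < t₀ ∧ ∀ τ, b ≤ τ → Ts τ = 0 :=
    ⟨max 0 (t₀ - δ), le_max_left _ _, max_lt ht₀ (by linarith),
      fun τ h => hvanish τ ((le_max_right _ _).trans h)⟩
  have hcm : Measurable Ts := hc.measurable
  have hGe : G =ᶠ[nhds t₀] fun t => ∫ τ in (0:ℝ)..b, Ts τ * (t - τ) ^ (-(1 / 2) : ℝ) := by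
    filter_upwards [Ioi_mem_nhds hbt] with t ht
    have ht' : b < t := ht
    rw [hG, abel_cut b t hb0 ht'.le _ (fun τ h => by rw [hb τ h, zero_div])]
    apply intervalIntegral.integral_congr
    intro τ hτ
    rw [Set.uIcc_of_le hb0] at hτ
    have : 0 ≤ t - τ := by linarith [hτ.2]
    simp only
    rw [Real.rpow_neg this, ← Real.sqrt_eq_rpow, div_eq_mul_inv]
  rw [abel_cut b t₀ hb0 hbt.le _ (fun τ h => by rw [hb τ h, zero_mul]),
    ← intervalIntegral.integral_const_mul]
  refine HasDerivAt.congr_of_eventuallyEq ?_ hGe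
  have hm : (b + t₀) / 2 < t₀ := by linarith
  refine (intervalIntegral.hasDerivAt_integral_of_dominated_loc_of_deriv_le
    (F := fun t τ => Ts τ * (t - τ) ^ (-(1 / 2) : ℝ))
    (F' := fun t τ => -(1 / 2) * (Ts τ * (t - τ) ^ (-(3 / 2) : ℝ)))
    (bound := fun τ => |Ts τ| * ((t₀ - b) / 2) ^ (-(3 / 2) : ℝ))
    (Ioi_mem_nhds hm) ?_ ?_ ?_ ?_ ?_ ?_).2
  · refine Filter.Eventually.of_forall fun x => Measurable.aestronglyMeasurable ?_
    fun_prop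
  · apply ContinuousOn.intervalIntegrable
    rw [Set.uIcc_of_le hb0]
    refine hc.continuousOn.mul (ContinuousOn.rpow_const (by fun_prop) ?_)
    intro x hx
    left
    have := hx.2
    linarith
  · refine Measurable.aestronglyMeasurable ?_
    fun_prop
  · refine Filter.Eventually.of_forall fun τ hτ x hx => ?_
    rw [Set.uIoc_of_le hb0] at hτ
    have hx' : (b + t₀) / 2 < x := hx
    have h1 : (t₀ - b) / 2 ≤ x - τ := by linarith [hτ.2]
    have h0 : 0 < (t₀ - b) / 2 := by linarith
    have h2 : (x - τ) ^ (-(3 / 2) : ℝ) ≤ ((t₀ - b) / 2) ^ (-(3 / 2) : ℝ) :=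
      Real.rpow_le_rpow_of_nonpos h0 h1 (by norm_num)
    have h3 : 0 ≤ (x - τ) ^ (-(3 / 2) : ℝ) := Real.rpow_nonneg (by linarith) _
    have h4 := mul_le_mul_of_nonneg_left h2 (abs_nonneg (Ts τ))
    have h5 := mul_nonneg (abs_nonneg (Ts τ)) h3
    rw [Real.norm_eq_abs, abs_mul, abs_mul, abs_of_nonneg h3]
    norm_num at *
    linarith
  · apply Continuous.intervalIntegrable
    fun_prop
  · refine Filter.Eventually.of_forall fun τ hτ x hx => ?_
    rw [Set.uIoc_of_le hb0] at hτ
    have hx' : (b + t₀) / 2 < x := hx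
    have h1 : x - τ ≠ 0 := by have := hτ.2; intro h; linarith
    have := ((((hasDerivAt_id x).sub_const τ).rpow_const (p := (-(1/2) : ℝ)) (Or.inl h1))).const_mul (Ts τ)
    refine HasDerivAt.congr_deriv this ?_
    simp only [id]
    rw [show (-(1/2) - 1 : ℝ) = -(3/2) by norm_num]
    ring
end
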